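/- Let L be a real random variable with M_L(t) = E[e^{tL}] < ∞ in a neighborhood of t₀, and let ε ≥ 0 and t₀ > 0 satisfy K_L'(t₀) = ε + 3·log((t₀+1)/t₀). Then δ_L(ε) ≤ exp(K_L(t₀) − ε t₀) · ( f(x₀(t₀), t₀) + t₀·(t₀/(1+t₀))^{1+3t₀}·K_L''(t₀) ), where x₀(t) = 3·log((t+1)/t) and f(x,t) = e^{−xt}(1 − e^{−x}). -/

import Mathlib

open MeasureTheory Real

/-!
Tilting by `t` turns `δ_L(ε)` into `exp (K(t) - ε t)` times the tilted expectation of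
`f(L - ε, t)⁺`, where `f(x, t) = e^{-xt} (1 - e^{-x})`, and under the tilted law `L` has mean
`K'(t)` and variance `K''(t)`. A parabola dominating `f(·, t)⁺` and centred at `K'(t) - ε`
therefore gives a bound in which the linear term vanishes. The point `x₀ = 3 log ((t + 1) / t)` is
the global maximizer of `∂²f/∂x²`, so the second-order Taylor polynomial at `x₀` dominates
`f(·, t)` everywhere. The maximal curvature is `t (t / (1 + t))^{1 + 3t}`, and Taylor's formula
contributes a further factor `1 / 2`.
-/

open ProbabilityTheory Set

lemma le_add_mul_sub_add_mul_sq_of_deriv_deriv_le {f : ℝ → ℝ} {c : ℝ}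
    (hf : Differentiable ℝ f) (hf' : Differentiable ℝ (deriv f))
    (hc : ∀ x, deriv (deriv f) x ≤ c) (a x : ℝ) :
    f x ≤ f a + deriv f a * (x - a) + c / 2 * (x - a) ^ 2 := by
  let g : ℝ → ℝ := fun y ↦ f a + deriv f a * (y - a) + c / 2 * (y - a) ^ 2 - f y
  have hg (y : ℝ) : HasDerivAt g (deriv f a + c * (y - a) - deriv f y) y := by
    have hsub : HasDerivAt (fun y ↦ y - a) 1 y := (hasDerivAt_id y).sub_const a
    refine HasDerivAt.congr_deriv ((((hsub.const_mul (deriv f a)).const_add (f a)).add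
      ((hsub.pow 2).const_mul (c / 2))).sub (hf y).hasDerivAt) ?_
    norm_num
    ring
  have hg' (y : ℝ) :
      HasDerivAt (fun y ↦ deriv f a + c * (y - a) - deriv f y) (c - deriv (deriv f) y) y :=
    HasDerivAt.congr_deriv
      (((((hasDerivAt_id y).sub_const a).const_mul c).const_add (deriv f a)).sub
        (hf' y).hasDerivAt) (by ring)
  have hconvex : ConvexOn ℝ univ g :=
    convexOn_of_hasDerivWithinAt2_nonneg convex_univ
      (continuous_iff_continuousAt.2 fun y ↦ (hg y).continuousAt).continuousOn
      (fun y _ ↦ (hg y).hasDerivWithinAt) (fun y _ ↦ (hg' y).hasDerivWithinAt)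
      (fun y _ ↦ sub_nonneg.2 (hc y))
  have hderiv : derivWithin g (Ioi a) a = 0 := by
    rw [(hg a).hasDerivWithinAt.derivWithin (uniqueDiffWithinAt_Ioi a)]
    ring
  have hmin : g a ≤ g x :=
    hconvex.isMinOn_of_rightDeriv_eq_zero (by simp) hderiv (mem_univ x)
  have hga : g a = 0 := by simp [g]
  exact sub_nonneg.1 (hga ▸ hmin)

lemma one_le_mul_exp_add_mul_exp {p q a b : ℝ} (hp : 0 ≤ p) (hq : 0 ≤ q) (hpq : p + q = 1)
    (hmean : p * a + q * b = 0) : 1 ≤ p * exp a + q * exp b := by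
  have hconvex := convexOn_exp.2 (mem_univ a) (mem_univ b) hp hq hpq
  rwa [smul_eq_mul, smul_eq_mul, hmean, exp_zero] at hconvex

/-- The function `x ↦ f(x, t) = e^{-xt} (1 - e^{-x})`: the privacy curve integrand
`1 - e^{-x}`, without its positive part, after division by the exponential weight `e^{tx}` of
the tilting. The parameter `t` comes first because calculus is done in `x`. -/
noncomputable def privacyKernel (t x : ℝ) : ℝ :=
  exp (-x * t) * (1 - exp (-x))

/-- The point `x₀(t) = 3 log ((t + 1) / t)`, at which the second derivative of
`privacyKernel t` is largest. -/
noncomputable def curvaturePeak (t : ℝ) : ℝ :=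
  3 * log ((t + 1) / t)

section Kernel

variable {t x : ℝ}

lemma privacyKernel_nonneg (t : ℝ) (hx : 0 ≤ x) : 0 ≤ privacyKernel t x :=
  mul_nonneg (exp_nonneg _) (sub_nonneg.2 (exp_le_one_iff.2 (neg_nonpos.2 hx)))

lemma hasDerivAt_privacyKernel (t x : ℝ) :
    HasDerivAt (privacyKernel t) (exp (-x * t) * ((t + 1) * exp (-x) - t)) x := by
  have hexp := (hasDerivAt_neg x).exp
  have hweight := ((hasDerivAt_neg x).mul_const t).exp
  exact (hweight.mul (hexp.const_sub 1)).congr_deriv (by ring)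

lemma hasDerivAt_deriv_privacyKernel (t x : ℝ) :
    HasDerivAt (deriv (privacyKernel t)) (exp (-x * t) * (t ^ 2 - (t + 1) ^ 2 * exp (-x))) x := by
  rw [funext fun y ↦ (hasDerivAt_privacyKernel t y).deriv]
  have hexp := (hasDerivAt_neg x).exp
  have hweight := ((hasDerivAt_neg x).mul_const t).exp
  exact (hweight.mul ((hexp.const_mul (t + 1)).sub_const t)).congr_deriv (by ring)

lemma exp_neg_log_add_one_div (ht : 0 < t) : exp (-log ((t + 1) / t)) = t / (1 + t) := by
  rw [exp_neg, exp_log (by positivity), inv_div, add_comm]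

lemma deriv_privacyKernel_nonpos (ht : 0 < t) (hx : log ((t + 1) / t) ≤ x) :
    deriv (privacyKernel t) x ≤ 0 := by
  have hexp : exp (-x) ≤ t / (1 + t) :=
    (exp_le_exp.2 (neg_le_neg hx)).trans_eq (exp_neg_log_add_one_div ht)
  rw [(hasDerivAt_privacyKernel t x).deriv]
  refine mul_nonpos_of_nonneg_of_nonpos (exp_nonneg _) (sub_nonpos.2 ?_)
  rwa [add_comm, mul_comm, ← le_div_iff₀ (by positivity)]

lemma log_add_one_div_nonneg (ht : 0 < t) : 0 ≤ log ((t + 1) / t) :=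
  log_nonneg ((one_le_div ht).2 (by linarith))

lemma exp_neg_curvaturePeak (ht : 0 < t) : exp (-curvaturePeak t) = (t / (1 + t)) ^ 3 := by
  rw [← exp_neg_log_add_one_div ht, ← exp_nat_mul, curvaturePeak]
  norm_num

lemma rpow_one_add_three_mul (ht : 0 < t) :
    (t / (1 + t)) ^ (1 + 3 * t) = t / (1 + t) * exp (-curvaturePeak t * t) := by
  rw [rpow_add (by positivity), rpow_one, exp_mul, exp_neg_curvaturePeak ht,
    ← rpow_natCast_mul (by positivity)]
  norm_num

lemma deriv_deriv_privacyKernel_curvaturePeak_add (ht : 0 < t) (y : ℝ) :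
    deriv (deriv (privacyKernel t)) (curvaturePeak t + y) =
      exp (-curvaturePeak t * t) * (t ^ 2 * (1 - t / (1 + t) * exp (-y)) * exp (-y * t)) := by
  have hexp : exp (-(curvaturePeak t + y)) = (t / (1 + t)) ^ 3 * exp (-y) := by
    rw [neg_add, exp_add, exp_neg_curvaturePeak ht]
  have hweight : exp (-(curvaturePeak t + y) * t)
      = exp (-curvaturePeak t * t) * exp (-y * t) := by
    rw [neg_add, add_mul, exp_add]
  rw [(hasDerivAt_deriv_privacyKernel t _).deriv, hexp, hweight]
  field_simp
  ring

lemma deriv_deriv_privacyKernel_le (ht : 0 < t) (x : ℝ) :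
    deriv (deriv (privacyKernel t)) x ≤ t * (t / (1 + t)) ^ (1 + 3 * t) := by
  obtain ⟨y, rfl⟩ : ∃ y, x = curvaturePeak t + y := ⟨x - curvaturePeak t, by ring⟩
  rw [deriv_deriv_privacyKernel_curvaturePeak_add ht, rpow_one_add_three_mul ht]
  set q := t / (1 + t)
  have hqt : q * (1 + t) = t := div_mul_cancel₀ t (by positivity)
  have hq0 : 0 ≤ q := by positivity
  have hq1 : 0 ≤ 1 - q := sub_nonneg.2 ((div_le_one (by positivity)).2 (by linarith))
  have hconvex : 1 ≤ q * exp (-y) + (1 - q) * exp (y * t) :=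
    one_le_mul_exp_add_mul_exp hq0 hq1 (by ring) (by linear_combination -y * hqt)
  have hcancel : exp (y * t) * exp (-y * t) = 1 := by
    rw [← exp_add]
    simp
  calc exp (-curvaturePeak t * t) * (t ^ 2 * (1 - q * exp (-y)) * exp (-y * t))
      ≤ exp (-curvaturePeak t * t) * (t ^ 2 * ((1 - q) * exp (y * t)) * exp (-y * t)) := by
        gcongr
        linarith
    _ = exp (-curvaturePeak t * t) * (t ^ 2 * (1 - q)) := by
        linear_combination exp (-curvaturePeak t * t) * (t ^ 2 * (1 - q)) * hcancel
    _ = t * (q * exp (-curvaturePeak t * t)) := by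
        linear_combination -exp (-curvaturePeak t * t) * t * hqt

lemma max_privacyKernel_le (ht : 0 < t) (x : ℝ) :
    max (privacyKernel t x) 0 ≤ privacyKernel t (curvaturePeak t)
      + deriv (privacyKernel t) (curvaturePeak t) * (x - curvaturePeak t)
      + t / 2 * (t / (1 + t)) ^ (1 + 3 * t) * (x - curvaturePeak t) ^ 2 := by
  have htaylor (y : ℝ) : privacyKernel t y ≤ privacyKernel t (curvaturePeak t)
      + deriv (privacyKernel t) (curvaturePeak t) * (y - curvaturePeak t)
      + t / 2 * (t / (1 + t)) ^ (1 + 3 * t) * (y - curvaturePeak t) ^ 2 := by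
    rw [div_mul_eq_mul_div]
    exact le_add_mul_sub_add_mul_sq_of_deriv_deriv_le
      (fun z ↦ (hasDerivAt_privacyKernel t z).differentiableAt)
      (fun z ↦ (hasDerivAt_deriv_privacyKernel t z).differentiableAt)
      (deriv_deriv_privacyKernel_le ht) (curvaturePeak t) y
  refine max_le (htaylor x) ?_
  rcases le_total 0 x with hx | hx
  · exact (privacyKernel_nonneg t hx).trans (htaylor x)
  · -- The parabola is nonnegative at `0` and decreasing to the left of `curvaturePeak t`.
    have hlog := log_add_one_div_nonneg ht
    have hpeak : log ((t + 1) / t) ≤ curvaturePeak t := by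
      rw [curvaturePeak]
      linarith
    refine (privacyKernel_nonneg t le_rfl).trans ((htaylor 0).trans ?_)
    have hslope := deriv_privacyKernel_nonpos ht hpeak
    have hlinear := mul_le_mul_of_nonpos_left (sub_le_sub_right hx (curvaturePeak t)) hslope
    have hsq : (0 - curvaturePeak t) ^ 2 ≤ (x - curvaturePeak t) ^ 2 := by nlinarith
    gcongr

end Kernel

/-- The privacy curve `δ_L(ε) = E[(1 - e^{-(L - ε)})⁺]` of the privacy loss variable `L`. -/
noncomputable def privacyCurve {Ω : Type*} [MeasurableSpace Ω] (L : Ω → ℝ) (μ : Measure Ω)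
    (ε : ℝ) : ℝ :=
  ∫ ω, max (1 - exp (-(L ω - ε))) 0 ∂μ

section Tilting

variable {Ω : Type*} [MeasurableSpace Ω] {μ : Measure Ω} {X L : Ω → ℝ} {t : ℝ}

lemma integral_add_mul_sub_integral_add_mul_sq [IsProbabilityMeasure μ] (hX : MemLp X 2 μ)
    (a b c : ℝ) :
    ∫ ω, (a + b * (X ω - μ[X]) + c * (X ω - μ[X]) ^ 2) ∂μ = a + c * Var[X; μ] := by
  have hdev : MemLp (fun ω ↦ X ω - μ[X]) 2 μ := hX.sub (memLp_const _)
  have hlin : Integrable (fun ω ↦ b * (X ω - μ[X])) μ :=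
    (hdev.integrable one_le_two).const_mul b
  have hmean : ∫ ω, (X ω - μ[X]) ∂μ = 0 := by
    simp [integral_sub (hX.integrable one_le_two) (integrable_const _)]
  have haffine : Integrable (fun ω ↦ a + b * (X ω - μ[X])) μ := (integrable_const a).add hlin
  rw [integral_add haffine (hdev.integrable_sq.const_mul c),
    integral_add (integrable_const a) hlin, integral_const_mul, integral_const_mul, hmean,
    ← variance_eq_integral hX.aemeasurable]
  simp

lemma mem_interior_integrableExpSet_iff : t ∈ interior (integrableExpSet X μ) ↔
    ∃ r > 0, ∀ u, |u - t| < r → Integrable (fun ω ↦ exp (u * X ω)) μ := by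
  rw [mem_interior_iff_mem_nhds, Metric.mem_nhds_iff]
  rfl

lemma deriv_deriv_cgf (ht : t ∈ interior (integrableExpSet X μ)) :
    deriv (deriv (cgf X μ)) t = Var[X; μ.tilted (t * X ·)] := by
  rw [variance_tilted_mul ht, iteratedDeriv_succ, iteratedDeriv_one]

lemma privacyCurve_eq_exp_mul_integral_tilted (ht : Integrable (fun ω ↦ exp (t * L ω)) μ)
    (ε : ℝ) : privacyCurve L μ ε =
      exp (cgf L μ t - ε * t) * ∫ ω, max (privacyKernel t (L ω - ε)) 0 ∂μ.tilted (t * L ·) := by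
  rw [privacyCurve, integral_tilted_mul_eq_cgf _ ht, ← integral_const_mul]
  congr with ω
  have hweight : exp (cgf L μ t - ε * t) * exp (t * L ω - cgf L μ t)
      * exp (-(L ω - ε) * t) = 1 := by
    rw [← exp_add, ← exp_add, exp_eq_one_iff]
    ring
  rw [smul_eq_mul, ← mul_assoc, mul_max_of_nonneg _ _ (by positivity), mul_zero, privacyKernel,
    ← mul_assoc, hweight, one_mul]

lemma privacyCurve_le_of_privacyKernel_le [NeZero μ]
    (ht : t ∈ interior (integrableExpSet L μ)) {ε x₁ a b c : ℝ}
    (hmean : deriv (cgf L μ) t = ε + x₁)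
    (hle : ∀ x, max (privacyKernel t x) 0 ≤ a + b * (x - x₁) + c * (x - x₁) ^ 2) :
    privacyCurve L μ ε ≤ exp (cgf L μ t - ε * t) * (a + c * deriv (deriv (cgf L μ)) t) := by
  have hexp : Integrable (fun ω ↦ exp (t * L ω)) μ :=
    interior_subset (s := integrableExpSet L μ) ht
  have := isProbabilityMeasure_tilted hexp
  set ν := μ.tilted (t * L ·)
  have hL : MemLp L 2 ν := memLp_tilted_mul ht 2
  have hνmean : ν[L] = ε + x₁ := (integral_tilted_mul_self ht).trans hmean
  rw [privacyCurve_eq_exp_mul_integral_tilted hexp, deriv_deriv_cgf ht,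
    ← integral_add_mul_sub_integral_add_mul_sq hL a b c, hνmean]
  have hdev : MemLp (fun ω ↦ L ω - (ε + x₁)) 2 ν := hL.sub (memLp_const _)
  refine mul_le_mul_of_nonneg_left (integral_mono_of_nonneg (.of_forall fun ω ↦ le_max_right _ _)
    (((integrable_const a).add ((hdev.integrable one_le_two).const_mul b)).add
      (hdev.integrable_sq.const_mul c)) (.of_forall fun ω ↦ ?_)) (exp_nonneg _)
  simpa only [sub_sub] using hle (L ω - ε)

end Tilting

theorem stmt10_general {Ω : Type*} [MeasurableSpace Ω] (μ : Measure Ω) [NeZero μ]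
    (L : Ω → ℝ) (t₀ : ℝ) (ht₀ : 0 < t₀) (hM : t₀ ∈ interior (integrableExpSet L μ))
    (ε : ℝ) (hsaddle : deriv (cgf L μ) t₀ = ε + curvaturePeak t₀) :
    privacyCurve L μ ε ≤ exp (cgf L μ t₀ - ε * t₀) *
      (privacyKernel t₀ (curvaturePeak t₀)
        + t₀ / 2 * (t₀ / (1 + t₀)) ^ (1 + 3 * t₀) * deriv (deriv (cgf L μ)) t₀) :=
  privacyCurve_le_of_privacyKernel_le hM hsaddle (max_privacyKernel_le ht₀)

/-- Quadratic-bound refinement of the moments accountant: if `t₀ > 0` solves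
`K_L'(t₀) = ε + 3 log((t₀+1)/t₀)`, then
`δ_L(ε) ≤ exp(K_L(t₀) - ε t₀) (f(x₀(t₀), t₀) + t₀ (t₀/(1+t₀))^{1+3t₀} K_L''(t₀))`,
where `x₀(t) = 3 log((t+1)/t)` and `f(x,t) = e^{-xt}(1-e^{-x})`. -/
theorem stmt10 {Ω : Type*} [MeasurableSpace Ω] (μ : Measure Ω) [IsProbabilityMeasure μ]
    (L : Ω → ℝ) (hL : Measurable L)
    (K : ℝ → ℝ) (hK : K = fun t => Real.log (∫ ω, Real.exp (t * L ω) ∂μ))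
    (t₀ : ℝ) (ht₀ : 0 < t₀)
    (hM : ∃ r > (0 : ℝ), ∀ t : ℝ, |t - t₀| < r →
      Integrable (fun ω => Real.exp (t * L ω)) μ)
    (ε : ℝ) (hε : 0 ≤ ε)
    (hsaddle : deriv K t₀ = ε + 3 * Real.log ((t₀ + 1) / t₀)) :
    (∫ ω, max (1 - Real.exp (-(L ω - ε))) 0 ∂μ) ≤
      Real.exp (K t₀ - ε * t₀) *
        (Real.exp (-(3 * Real.log ((t₀ + 1) / t₀)) * t₀)
            * (1 - Real.exp (-(3 * Real.log ((t₀ + 1) / t₀))))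
          + t₀ * (t₀ / (1 + t₀)) ^ (1 + 3 * t₀) * deriv (deriv K) t₀) := by
  obtain rfl : K = cgf L μ := hK
  have hint := mem_interior_integrableExpSet_iff.2 hM
  have hvar : 0 ≤ deriv (deriv (cgf L μ)) t₀ := deriv_deriv_cgf hint ▸ variance_nonneg L _
  refine (stmt10_general μ L t₀ ht₀ hint ε hsaddle).trans ?_
  simp only [privacyKernel, curvaturePeak]
  gcongr
  exact half_le_self ht₀.le
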